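/- For every β ∈ ℝ, g_β((1−β)/3) = −(1/9)(β²+β−1)(β²+β+1)². Consequently, for β ∈ (0,1), the number (1−β)/3 is a root of g_β if and only if β = σ; in particular the strict inequality m₂ = m₃ > m₁ defining the anticlockwise orbit (which fails exactly when μ = (1−β)/3) can only break down at β = σ. -/

import Mathlib

/-- The cubic governing the anticlockwise (anti-Shapley) periodic orbit. -/
noncomputable def gAnti (β Z : ℝ) : ℝ :=
  (3*β^3 + 3*β^2 + 3*β)*Z^3 - (5*β^3 + 7*β^2 + 4*β + 2)*Z^2
    + (2*β^3 + 5*β^2 + β + 1)*Z - β^2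

theorem gAnti_one_sub_div_three (β : ℝ) :
    gAnti β ((1 - β)/3) = -(1/9)*(β^2 + β - 1)*(β^2 + β + 1)^2 := by
  unfold gAnti
  ring

theorem sq_add_self_sub_one_eq_zero_iff {x : ℝ} (hx : 0 < x) :
    x^2 + x - 1 = 0 ↔ x = (Real.sqrt 5 - 1)/2 := by
  have h5 : Real.sqrt 5 ^ 2 = 5 := Real.sq_sqrt (by norm_num)
  constructor
  · intro h
    have hsqrt : Real.sqrt 5 = 2*x + 1 := by
      rw [Real.sqrt_eq_iff_mul_self_eq (by norm_num) (by linarith)]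
      linarith
    linarith
  · rintro rfl
    linarith

/-- g_β((1−β)/3) = −(1/9)(β²+β−1)(β²+β+1)²; hence for β ∈ (0,1)
the number (1−β)/3 is a root of g_β iff β = σ = (√5−1)/2. -/
theorem stmt11 :
    (∀ β : ℝ, gAnti β ((1 - β)/3) = -(1/9)*(β^2 + β - 1)*(β^2 + β + 1)^2) ∧
    (∀ β ∈ Set.Ioo (0 : ℝ) 1,
      (gAnti β ((1 - β)/3) = 0 ↔ β = (Real.sqrt 5 - 1)/2)) := by
  refine ⟨gAnti_one_sub_div_three, fun β hβ => ?_⟩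
  have hpos : 0 < β^2 + β + 1 := by nlinarith [hβ.1]
  rw [gAnti_one_sub_div_three, ← sq_add_self_sub_one_eq_zero_iff hβ.1]
  simp [hpos.ne']
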